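/- For every finite MDP with discount factor γ ∈ [0,1), every β ∈ ℝ, every x ∈ (0,∞) and every y ∈ ℝ, the normalized softmax likelihood is invariant under the affine reward transformation: π^•_{xR+y}(a|s) = π^•_R(a|s) for all s ∈ S, a ∈ A. -/

import Mathlib

/-!
The affine image `x Q* + y / (1 - γ)` of the optimal value function for `R` is a fixed point of
the Bellman optimality operator for the reward `x R + y`: maxima commute with increasing affine
maps (`sup'_affine`), and the constant satisfies `c = y + γ c` because each `T s a` has total
mass one. Since the Bellman operator is a `γ`-contraction, its fixed point is unique
(`bellman_unique`), so `Q*_{xR+y} = x Q*_R + c`. Min-max normalization cancels both `x` and `c`,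
and an increasing affine map preserves whether `Q*(s, ·)` is constant, so the normalized value
functions agree, and with them the softmax likelihoods.
-/

open Finset
open scoped Classical

theorem sup'_affine {A : Type*} [Fintype A] [Nonempty A] {x : ℝ} (hx : 0 < x) (c : ℝ)
    (f : A → ℝ) :
    univ.sup' univ_nonempty (fun a => x * f a + c) = x * univ.sup' univ_nonempty f + c := by
  have hm : Monotone (fun t : ℝ => x * t + c) := fun u v huv => by
    have := mul_le_mul_of_nonneg_left huv hx.le
    simpa using this
  exact (Finset.comp_sup'_eq_sup'_comp univ_nonempty (fun t : ℝ => x * t + c)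
    fun u v => hm.map_max).symm

theorem inf'_affine {A : Type*} [Fintype A] [Nonempty A] {x : ℝ} (hx : 0 < x) (c : ℝ)
    (f : A → ℝ) :
    univ.inf' univ_nonempty (fun a => x * f a + c) = x * univ.inf' univ_nonempty f + c := by
  have hm : Monotone (fun t : ℝ => x * t + c) := fun u v huv => by
    have := mul_le_mul_of_nonneg_left huv hx.le
    simpa using this
  refine le_antisymm ?_ (Finset.le_inf' _ _ fun a _ => hm (Finset.inf'_le f (mem_univ a)))
  obtain ⟨a, ha, h⟩ := Finset.exists_mem_eq_inf' univ_nonempty f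
  rw [h]
  exact Finset.inf'_le (fun a => x * f a + c) ha

/-- The maximum over actions is nonexpansive in the supremum norm (one-sided form). -/
theorem sup'_le_sup'_add {A : Type*} [Fintype A] [Nonempty A] {f g : A → ℝ} {M : ℝ}
    (h : ∀ a, f a ≤ g a + M) :
    univ.sup' univ_nonempty f ≤ univ.sup' univ_nonempty g + M := by
  refine Finset.sup'_le _ _ fun a _ => (h a).trans ?_
  have := Finset.le_sup' g (mem_univ a)
  linarith

/-- Uniqueness of the fixed point of the Bellman optimality operator: at a pair `(s, a)`
maximizing `|P - Q|`, the contraction property bounds that maximum by `γ` times itself. -/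
theorem bellman_unique {S A : Type*} [Fintype S] [Fintype A] [Nonempty S] [Nonempty A]
    (T : S → A → S → ℝ) (hT0 : ∀ s a s', 0 ≤ T s a s') (hT1 : ∀ s a, ∑ s', T s a s' = 1)
    (r : S → ℝ) (γ : ℝ) (hγ0 : 0 ≤ γ) (hγ1 : γ < 1) (P Q : S → A → ℝ)
    (hP : ∀ s a, P s a = r s + γ * ∑ s', T s a s' * univ.sup' univ_nonempty (P s'))
    (hQ : ∀ s a, Q s a = r s + γ * ∑ s', T s a s' * univ.sup' univ_nonempty (Q s')) :
    P = Q := by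
  obtain ⟨⟨s₀, a₀⟩, hmax⟩ := Finite.exists_max (fun p : S × A => |P p.1 p.2 - Q p.1 p.2|)
  set M := |P s₀ a₀ - Q s₀ a₀| with hM
  have hle : ∀ s a, |P s a - Q s a| ≤ M := fun s a => hmax (s, a)
  have hsup : ∀ s, |univ.sup' univ_nonempty (P s) - univ.sup' univ_nonempty (Q s)| ≤ M := by
    intro s
    have h1 : univ.sup' univ_nonempty (P s) ≤ univ.sup' univ_nonempty (Q s) + M :=
      sup'_le_sup'_add fun a => by linarith [(abs_le.mp (hle s a)).2]
    have h2 : univ.sup' univ_nonempty (Q s) ≤ univ.sup' univ_nonempty (P s) + M :=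
      sup'_le_sup'_add fun a => by linarith [(abs_le.mp (hle s a)).1]
    exact abs_le.mpr ⟨by linarith, by linarith⟩
  have hcontr : M ≤ γ * M := by
    have hdiff : P s₀ a₀ - Q s₀ a₀ = γ * ∑ s', T s₀ a₀ s' *
        (univ.sup' univ_nonempty (P s') - univ.sup' univ_nonempty (Q s')) := by
      rw [hP, hQ]
      simp only [mul_sub, Finset.sum_sub_distrib]
      ring
    calc M = γ * |∑ s', T s₀ a₀ s' *
        (univ.sup' univ_nonempty (P s') - univ.sup' univ_nonempty (Q s'))| := by
          rw [hM, hdiff, abs_mul, abs_of_nonneg hγ0]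
      _ ≤ γ * ∑ s', T s₀ a₀ s' * M := by
          refine mul_le_mul_of_nonneg_left ((Finset.abs_sum_le_sum_abs _ _).trans ?_) hγ0
          refine Finset.sum_le_sum fun s' _ => ?_
          rw [abs_mul, abs_of_nonneg (hT0 s₀ a₀ s')]
          exact mul_le_mul_of_nonneg_left (hsup s') (hT0 s₀ a₀ s')
      _ = γ * M := by rw [← Finset.sum_mul, hT1, one_mul]
  have hM0 : M ≤ 0 := by nlinarith
  funext s a
  have := abs_nonpos_iff.mp ((hle s a).trans hM0)
  linarith

/-- the normalized softmax likelihood `π^•` is invariant under the affine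
reward transformation `R ↦ xR + y`: `π^•_{xR+y}(a|s) = π^•_R(a|s)` for all s, a.
Here `Q^•` is the min-max normalization of `Q*` at states where `Q*(s,·)` is
non-constant, and the fixed constant ε ∈ (0,1] otherwise. -/
theorem normalized_softmax_affine_invariance {S A : Type*} [Fintype S] [Fintype A]
    [Nonempty S] [Nonempty A]
    (T : S → A → S → ℝ) (hT0 : ∀ s a s', 0 ≤ T s a s') (hT1 : ∀ s a, ∑ s', T s a s' = 1)
    (R : S → ℝ) (γ : ℝ) (hγ0 : 0 ≤ γ) (hγ1 : γ < 1)
    (β : ℝ) (x y : ℝ) (hx : 0 < x)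
    (ε : ℝ) (hε0 : 0 < ε) (hε1 : ε ≤ 1)
    (Q Qxy : S → A → ℝ)
    (hQ : ∀ s a, Q s a = R s + γ * ∑ s', T s a s' * univ.sup' univ_nonempty (Q s'))
    (hQxy : ∀ s a, Qxy s a =
      (x * R s + y) + γ * ∑ s', T s a s' * univ.sup' univ_nonempty (Qxy s'))
    (QbR QbXY : S → A → ℝ)
    (hQbR : ∀ s a, QbR s a =
      if ∃ a1 a2 : A, Q s a1 ≠ Q s a2 then
        (Q s a - univ.inf' univ_nonempty (Q s)) /
          (univ.sup' univ_nonempty (Q s) - univ.inf' univ_nonempty (Q s))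
      else ε)
    (hQbXY : ∀ s a, QbXY s a =
      if ∃ a1 a2 : A, Qxy s a1 ≠ Qxy s a2 then
        (Qxy s a - univ.inf' univ_nonempty (Qxy s)) /
          (univ.sup' univ_nonempty (Qxy s) - univ.inf' univ_nonempty (Qxy s))
      else ε) :
    ∀ s a, Real.exp (β * QbXY s a) / (∑ a', Real.exp (β * QbXY s a')) =
      Real.exp (β * QbR s a) / (∑ a', Real.exp (β * QbR s a')) := by
  have haff : Qxy = fun s a => x * Q s a + y / (1 - γ) := by
    refine bellman_unique T hT0 hT1 (fun s => x * R s + y) γ hγ0 hγ1 _ _ hQxy fun s a => ?_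
    have hne : 1 - γ ≠ 0 := by linarith
    have hc : y / (1 - γ) = y + γ * (y / (1 - γ)) := by
      field_simp
      ring
    have hsum : ∑ s', T s a s' *
        univ.sup' univ_nonempty (fun a' => x * Q s' a' + y / (1 - γ)) =
        x * (∑ s', T s a s' * univ.sup' univ_nonempty (Q s')) + y / (1 - γ) := by
      simp only [sup'_affine hx, mul_add, Finset.sum_add_distrib]
      rw [← Finset.sum_mul, hT1, one_mul, Finset.mul_sum]
      congr 1
      exact Finset.sum_congr rfl fun s' _ => by ring
    simp only [hsum]
    rw [hQ s a]
    linear_combination hc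
  have hQb : QbXY = QbR := by
    funext s a
    have hiff : (∃ a1 a2 : A, Qxy s a1 ≠ Qxy s a2) ↔ ∃ a1 a2 : A, Q s a1 ≠ Q s a2 := by
      simp [haff, hx.ne']
    have hs : univ.sup' univ_nonempty (Qxy s) =
        x * univ.sup' univ_nonempty (Q s) + y / (1 - γ) := by
      rw [haff]
      exact sup'_affine hx _ _
    have hi : univ.inf' univ_nonempty (Qxy s) =
        x * univ.inf' univ_nonempty (Q s) + y / (1 - γ) := by
      rw [haff]
      exact inf'_affine hx _ _
    rw [hQbXY, hQbR, hs, hi]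
    simp only [hiff]
    congr 1
    simp only [haff, add_sub_add_right_eq_sub, ← mul_sub]
    exact mul_div_mul_left _ _ hx.ne'
  intro s a
  rw [hQb]
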